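/- Let ν > 0, μ > 0, and let u, B : ℝ × ℝ³ → ℝ³ and P : ℝ × ℝ³ → ℝ be smooth (jointly in (t,x)) satisfying at every (t,x) ∈ ℝ × ℝ³ the viscous MHD system: ∂ₜu − νΔu + (curl u) × u + B × (curl B) + ∇P = 0, div u = 0, ∂ₜB − μΔB = curl(u × B), div B = 0. Assume that for every t, u(t,·) satisfies the Navier-slip boundary condition (u₃ = ∂₃u₁ = ∂₃u₂ = 0 on ∂Ω) and B(t,·) satisfies the insulating boundary condition (B₁ = B₂ = 0 on ∂Ω). Then for every t, (curl)³u(t,·) × n = 0 on ∂Ω; that is (noting (curl)³u = −curl(Δu) since div u = 0), the first and second components of curl(Δu(t,·)) vanish at every point of ∂Ω. -/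

import Mathlib

noncomputable section

open MeasureTheory

/-- Points/vectors in ℝ³, indexed by `Fin 3` (so index `0,1,2` stand for coordinates `1,2,3`). -/
abbrev V3 : Type := Fin 3 → ℝ

/-- Partial derivative in the `i`-th coordinate direction. -/
def pd (i : Fin 3) (f : V3 → ℝ) (x : V3) : ℝ := fderiv ℝ f x (Pi.single i 1)

/-- Divergence of a vector field. -/
def vdiv (u : V3 → V3) (x : V3) : ℝ :=
  pd 0 (fun y => u y 0) x + pd 1 (fun y => u y 1) x + pd 2 (fun y => u y 2) x

/-- Curl of a vector field. -/
def vcurl (u : V3 → V3) (x : V3) : V3 :=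
  ![pd 1 (fun y => u y 2) x - pd 2 (fun y => u y 1) x,
    pd 2 (fun y => u y 0) x - pd 0 (fun y => u y 2) x,
    pd 0 (fun y => u y 1) x - pd 1 (fun y => u y 0) x]

/-- Laplacian of a scalar function. -/
def lap (f : V3 → ℝ) (x : V3) : ℝ :=
  pd 0 (pd 0 f) x + pd 1 (pd 1 f) x + pd 2 (pd 2 f) x

/-- Componentwise Laplacian of a vector field. -/
def vlap (u : V3 → V3) (x : V3) : V3 := fun i => lap (fun y => u y i) x

/-- Advective derivative `(u·∇)V`. -/
def adv (u V : V3 → V3) (x : V3) : V3 := fun i =>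
  u x 0 * pd 0 (fun y => V y i) x + u x 1 * pd 1 (fun y => V y i) x +
    u x 2 * pd 2 (fun y => V y i) x

/-- Cross product in ℝ³. -/
def cross (a b : V3) : V3 :=
  ![a 1 * b 2 - a 2 * b 1, a 2 * b 0 - a 0 * b 2, a 0 * b 1 - a 1 * b 0]

/-- Dot product in ℝ³. -/
def dot (a b : V3) : ℝ := a 0 * b 0 + a 1 * b 1 + a 2 * b 2

/-- Gradient of a scalar function. -/
def grad (f : V3 → ℝ) (x : V3) : V3 := fun i => pd i f x

/-- The boundary `∂Ω = {x : x₃ = 0 or x₃ = 1}`. -/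
def onBdry (x : V3) : Prop := x 2 = 0 ∨ x 2 = 1

/-- Horizontal periodicity (period 1 in x₁ and x₂) of a scalar function. -/
def hperS (f : V3 → ℝ) : Prop :=
  (∀ x, f (x + Pi.single 0 1) = f x) ∧ (∀ x, f (x + Pi.single 1 1) = f x)

/-- Horizontal periodicity (period 1 in x₁ and x₂) of a vector field. -/
def hperV (u : V3 → V3) : Prop :=
  (∀ x, u (x + Pi.single 0 1) = u x) ∧ (∀ x, u (x + Pi.single 1 1) = u x)

/-- The unit cube `Q = [0,1]³`. -/
def Q3 : Set V3 := Set.Icc 0 1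

/-!
On a horizontal wall the Navier-slip condition for `V` reads `V · n = 0` and `curl V × n = 0`, so a
slip field has an insulating curl. Conversely, if `B` and `ΔB` are both insulating and `div B = 0`,
then `curl B` is slip, because `curl (curl B) = -ΔB`. The two conditions are linked by the product
rule that slip × insulating is slip when the insulating factor is divergence free.

Since `u × B` is slip, its curl is insulating, and the induction equation makes `ΔB` insulating; so
`curl B` is slip. Then `∂ₜu`, `curl u × u` and `B × curl B` are all slip, and taking the curl of the
momentum equation removes the pressure and shows that `ν curl Δu` is insulating.
-/

section Calculus

variable {𝕜 E F : Type*} [NontriviallyNormedField 𝕜]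
  [NormedAddCommGroup E] [NormedSpace 𝕜 E] [NormedAddCommGroup F] [NormedSpace 𝕜 F]

theorem fderiv_fderiv_apply_comm [IsRCLikeNormedField 𝕜] {f : E → F} {x : E}
    (hf : ContDiffAt 𝕜 2 f x) (v w : E) :
    fderiv 𝕜 (fun y => fderiv 𝕜 f y v) x w = fderiv 𝕜 (fun y => fderiv 𝕜 f y w) x v := by
  have hf' : DifferentiableAt 𝕜 (fderiv 𝕜 f) x :=
    (hf.fderiv_right (m := 1) (by norm_num)).differentiableAt one_ne_zero
  have hsymm : IsSymmSndFDerivAt 𝕜 f x := hf.isSymmSndFDerivAt (by simp)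
  simpa [fderiv_clm_apply hf' (differentiableAt_const _)] using hsymm w v

theorem deriv_slice_left {g : 𝕜 × E → F} {t : 𝕜} {x : E} (hg : DifferentiableAt 𝕜 g (t, x)) :
    deriv (fun s => g (s, x)) t = fderiv 𝕜 g (t, x) (1, 0) :=
  (hg.hasFDerivAt.comp_hasDerivAt t ((hasDerivAt_id t).prodMk (hasDerivAt_const t x))).deriv

theorem fderiv_slice_right_apply {g : 𝕜 × E → F} {t : 𝕜} {x : E}
    (hg : DifferentiableAt 𝕜 g (t, x)) (v : E) :
    fderiv 𝕜 (fun y => g (t, y)) x v = fderiv 𝕜 g (t, x) (0, v) :=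
  DFunLike.congr_fun (hg.hasFDerivAt.comp x (hasFDerivAt_prodMk_right t x)).fderiv v

theorem contDiff_deriv_slice {g : 𝕜 × E → F} {n : WithTop ℕ∞} (hg : ContDiff 𝕜 (n + 1) g) (t : 𝕜) :
    ContDiff 𝕜 n fun x => deriv (fun s => g (s, x)) t := by
  have hg' : Differentiable 𝕜 g := hg.differentiable (by simp)
  simp only [fun x => deriv_slice_left (hg' (t, x))]
  exact ((hg.fderiv_right le_rfl).comp (contDiff_prodMk_right t)).clm_apply contDiff_const

theorem fderiv_deriv_slice_comm [IsRCLikeNormedField 𝕜] {g : 𝕜 × E → F}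
    (hg : ContDiff 𝕜 2 g) (t : 𝕜) (x v : E) :
    fderiv 𝕜 (fun y => deriv (fun s => g (s, y)) t) x v =
      deriv (fun s => fderiv 𝕜 (fun y => g (s, y)) x v) t := by
  have hg' : Differentiable 𝕜 g := hg.differentiable two_ne_zero
  have hdir (w : 𝕜 × E) : Differentiable 𝕜 fun z => fderiv 𝕜 g z w :=
    ((hg.fderiv_right (m := 1) (by norm_num)).clm_apply contDiff_const).differentiable one_ne_zero
  calc fderiv 𝕜 (fun y => deriv (fun s => g (s, y)) t) x v
      = fderiv 𝕜 (fun y => fderiv 𝕜 g (t, y) (1, 0)) x v := by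
        simp only [fun y => deriv_slice_left (hg' (t, y))]
    _ = fderiv 𝕜 (fun z => fderiv 𝕜 g z (1, 0)) (t, x) (0, v) :=
        fderiv_slice_right_apply (hdir (1, 0) (t, x)) v
    _ = fderiv 𝕜 (fun z => fderiv 𝕜 g z (0, v)) (t, x) (1, 0) :=
        fderiv_fderiv_apply_comm hg.contDiffAt _ _
    _ = deriv (fun s => fderiv 𝕜 g (s, x) (0, v)) t :=
        (deriv_slice_left (hdir (0, v) (t, x))).symm
    _ = deriv (fun s => fderiv 𝕜 (fun y => g (s, y)) x v) t := by
        simp only [fun s => fderiv_slice_right_apply (hg' (s, x)) v]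

end Calculus

section PartialDerivatives

variable {f g : V3 → ℝ} {x : V3}

theorem pd_add (hf : DifferentiableAt ℝ f x) (hg : DifferentiableAt ℝ g x) (i : Fin 3) :
    pd i (fun y => f y + g y) x = pd i f x + pd i g x := by
  simp [pd, fderiv_fun_add hf hg]

theorem pd_sub (hf : DifferentiableAt ℝ f x) (hg : DifferentiableAt ℝ g x) (i : Fin 3) :
    pd i (fun y => f y - g y) x = pd i f x - pd i g x := by
  simp [pd, fderiv_fun_sub hf hg]

theorem pd_mul (hf : DifferentiableAt ℝ f x) (hg : DifferentiableAt ℝ g x) (i : Fin 3) :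
    pd i (fun y => f y * g y) x = f x * pd i g x + g x * pd i f x := by
  simp [pd, fderiv_fun_mul hf hg]

theorem pd_const_mul (a : ℝ) (f : V3 → ℝ) (i : Fin 3) (x : V3) :
    pd i (fun y => a * f y) x = a * pd i f x :=
  DFunLike.congr_fun (congrFun (fderiv_const_smul_field (f := f) a) x) (Pi.single i 1)

theorem pd_comm (hf : ContDiffAt ℝ 2 f x) (i j : Fin 3) :
    pd i (pd j f) x = pd j (pd i f) x :=
  fderiv_fderiv_apply_comm hf _ _

theorem contDiff_pd {n : WithTop ℕ∞} (hf : ContDiff ℝ (n + 1) f) (i : Fin 3) :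
    ContDiff ℝ n (pd i f) :=
  (hf.fderiv_right le_rfl).clm_apply contDiff_const

theorem differentiable_pd (hf : ContDiff ℝ 2 f) (i : Fin 3) : Differentiable ℝ (pd i f) :=
  (contDiff_pd (n := 1) (hf.of_le (by norm_num)) i).differentiable one_ne_zero

theorem pd_eq_zero_of_forall_plane {c : ℝ} (hf : DifferentiableAt ℝ f x)
    {i j : Fin 3} (hij : i ≠ j) (hzero : ∀ y, y j = c → f y = 0) (hx : x j = c) :
    pd i f x = 0 := by
  have hline (s : ℝ) : f (x + s • (Pi.single i 1 : V3)) = 0 := hzero _ (by simp [hij.symm, hx])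
  rw [pd, ← hf.lineDeriv_eq_fderiv, lineDeriv]
  simp only [hline, deriv_const]

end PartialDerivatives

section VectorCalculus

variable {V W : V3 → V3} {x : V3} {n : WithTop ℕ∞}

theorem contDiff_vcurl (hV : ContDiff ℝ (n + 1) V) : ContDiff ℝ n (vcurl V) := by
  have h (i j : Fin 3) : ContDiff ℝ n (pd i fun y => V y j) := contDiff_pd (contDiff_pi.mp hV j) i
  refine contDiff_pi.mpr fun i => ?_
  fin_cases i
  · exact (h 1 2).sub (h 2 1)
  · exact (h 2 0).sub (h 0 2)
  · exact (h 0 1).sub (h 1 0)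

theorem differentiable_vcurl (hV : ContDiff ℝ 2 V) : Differentiable ℝ (vcurl V) :=
  (contDiff_vcurl (n := 1) (hV.of_le (by norm_num))).differentiable one_ne_zero

theorem contDiff_vlap (hV : ContDiff ℝ (n + 2) V) : ContDiff ℝ n (vlap V) := by
  have hV' : ContDiff ℝ (n + 1 + 1) V := by rwa [add_assoc, one_add_one_eq_two]
  have h (i j : Fin 3) : ContDiff ℝ n (pd i (pd i fun y => V y j)) :=
    contDiff_pd (contDiff_pd (contDiff_pi.mp hV' j) i) i
  exact contDiff_pi.mpr fun j => ((h 0 j).add (h 1 j)).add (h 2 j)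

theorem differentiable_cross (hV : Differentiable ℝ V) (hW : Differentiable ℝ W) :
    Differentiable ℝ fun x => cross (V x) (W x) := by
  have h (i j : Fin 3) : Differentiable ℝ fun x => V x i * W x j :=
    (differentiable_pi.mp hV i).mul (differentiable_pi.mp hW j)
  refine differentiable_pi.mpr fun i => ?_
  fin_cases i
  · exact (h 1 2).sub (h 2 1)
  · exact (h 2 0).sub (h 0 2)
  · exact (h 0 1).sub (h 1 0)

theorem cross_swap (a b : V3) : cross b a = -cross a b := by
  ext i
  fin_cases i <;> simp [cross, mul_comm]

theorem vcurl_sub (hV : DifferentiableAt ℝ V x) (hW : DifferentiableAt ℝ W x) :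
    vcurl (V - W) x = vcurl V x - vcurl W x := by
  have h (i j : Fin 3) : pd i (fun y => V y j - W y j) x =
      pd i (fun y => V y j) x - pd i (fun y => W y j) x :=
    pd_sub (differentiableAt_pi.mp hV j) (differentiableAt_pi.mp hW j) i
  ext i
  fin_cases i <;> simp [vcurl, h, sub_sub_sub_comm]

theorem vcurl_const_smul (a : ℝ) (V : V3 → V3) (x : V3) : vcurl (a • V) x = a • vcurl V x := by
  have h (i j : Fin 3) : pd i (fun y => a * V y j) x = a * pd i (fun y => V y j) x :=
    pd_const_mul a _ i x
  ext i
  fin_cases i <;> simp [vcurl, h, mul_sub]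

theorem vcurl_grad {f : V3 → ℝ} (hf : ContDiffAt ℝ 2 f x) : vcurl (grad f) x = 0 := by
  ext i
  fin_cases i <;> exact sub_eq_zero.mpr (pd_comm hf _ _)

theorem vdiv_vcurl (hV : ContDiff ℝ 2 V) (x : V3) : vdiv (vcurl V) x = 0 := by
  have hVj (j : Fin 3) : ContDiff ℝ 2 fun y => V y j := contDiff_pi.mp hV j
  have hpd (i j : Fin 3) : DifferentiableAt ℝ (pd i fun y => V y j) x :=
    differentiable_pd (hVj j) i x
  have hcomm (i j k : Fin 3) := pd_comm (hVj k).contDiffAt (x := x) i j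
  simp only [vdiv, vcurl, Matrix.cons_val, pd_sub (hpd _ _) (hpd _ _)]
  linear_combination hcomm 0 1 2 + hcomm 1 2 0 + hcomm 2 0 1

theorem vcurl_vcurl (hV : ContDiff ℝ 2 V) (x : V3) :
    vcurl (vcurl V) x = grad (vdiv V) x - vlap V x := by
  have hVj (j : Fin 3) : ContDiff ℝ 2 fun y => V y j := contDiff_pi.mp hV j
  have hpd (i j : Fin 3) : DifferentiableAt ℝ (pd i fun y => V y j) x :=
    differentiable_pd (hVj j) i x
  have hcomm (i j k : Fin 3) := pd_comm (hVj k).contDiffAt (x := x) i j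
  have hgrad (i : Fin 3) : grad (vdiv V) x i = pd i (pd 0 fun y => V y 0) x +
      pd i (pd 1 fun y => V y 1) x + pd i (pd 2 fun y => V y 2) x := by
    change pd i (fun y => vdiv V y) x = _
    simp only [vdiv]
    rw [pd_add ((hpd 0 0).fun_add (hpd 1 1)) (hpd 2 2), pd_add (hpd 0 0) (hpd 1 1)]
  ext i
  fin_cases i <;>
    simp only [Fin.zero_eta, Fin.mk_one, Fin.reduceFinMk, Pi.sub_apply, hgrad, vcurl, vlap, lap,
      Matrix.cons_val, pd_sub (hpd _ _) (hpd _ _)]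
  · linear_combination hcomm 1 0 1 + hcomm 2 0 2
  · linear_combination hcomm 0 1 0 + hcomm 2 1 2
  · linear_combination hcomm 0 2 0 + hcomm 1 2 1

end VectorCalculus

section WallConditions

/-- The Navier-slip condition `V · n = 0`, `curl V × n = 0` on the plane `x₃ = c`, written out in
coordinates. -/
def IsNavierSlipAt (c : ℝ) (V : V3 → V3) : Prop :=
  ∀ x, x 2 = c → V x 2 = 0 ∧ pd 2 (fun y => V y 0) x = 0 ∧ pd 2 (fun y => V y 1) x = 0

/-- The insulating condition `W × n = 0` on the plane `x₃ = c`: the tangential components of `W`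
vanish there. -/
def IsInsulatingAt (c : ℝ) (W : V3 → V3) : Prop :=
  ∀ x, x 2 = c → W x 0 = 0 ∧ W x 1 = 0

variable {c : ℝ} {V W : V3 → V3}

theorem isNavierSlipAt_iff_vcurl (hV : Differentiable ℝ V) :
    IsNavierSlipAt c V ↔ (∀ x, x 2 = c → V x 2 = 0) ∧ IsInsulatingAt c (vcurl V) := by
  rw [IsNavierSlipAt, forall₂_and]
  refine and_congr_right fun hnormal => forall₂_congr fun x hx => ?_
  have htan {i : Fin 3} (hi : i ≠ 2) : pd i (fun y => V y 2) x = 0 :=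
    pd_eq_zero_of_forall_plane (differentiable_pi.mp hV 2 x) hi hnormal hx
  simp [vcurl, htan, and_comm]

theorem IsNavierSlipAt.sub (hVs : IsNavierSlipAt c V) (hWs : IsNavierSlipAt c W)
    (hV : Differentiable ℝ V) (hW : Differentiable ℝ W) : IsNavierSlipAt c (V - W) := by
  intro x hx
  obtain ⟨hV2, hdV0, hdV1⟩ := hVs x hx
  obtain ⟨hW2, hdW0, hdW1⟩ := hWs x hx
  have hsub (j : Fin 3) : pd 2 (fun y => V y j - W y j) x =
      pd 2 (fun y => V y j) x - pd 2 (fun y => W y j) x :=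
    pd_sub (differentiable_pi.mp hV j x) (differentiable_pi.mp hW j x) 2
  simp [hsub, hV2, hdV0, hdV1, hW2, hdW0, hdW1]

theorem IsInsulatingAt.pd_tangential_eq_zero (hWi : IsInsulatingAt c W)
    (hW : Differentiable ℝ W) {x : V3} (hx : x 2 = c) {i j : Fin 3} (hi : i ≠ 2) (hj : j ≠ 2) :
    pd i (fun y => W y j) x = 0 := by
  refine pd_eq_zero_of_forall_plane (differentiable_pi.mp hW j x) hi (fun y hy => ?_) hx
  fin_cases j
  · exact (hWi y hy).1
  · exact (hWi y hy).2
  · exact absurd rfl hj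

theorem IsInsulatingAt.pd_normal_eq_vdiv (hWi : IsInsulatingAt c W) (hW : Differentiable ℝ W)
    {x : V3} (hx : x 2 = c) : pd 2 (fun y => W y 2) x = vdiv W x := by
  have htan {j : Fin 3} (hj : j ≠ 2) := hWi.pd_tangential_eq_zero hW hx hj hj
  simp [vdiv, htan]

theorem IsNavierSlipAt.cross_isInsulatingAt (hVs : IsNavierSlipAt c V)
    (hWi : IsInsulatingAt c W) (hV : Differentiable ℝ V) (hW : Differentiable ℝ W)
    (hdiv : ∀ x, x 2 = c → vdiv W x = 0) : IsNavierSlipAt c fun x => cross (V x) (W x) := by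
  intro x hx
  obtain ⟨hV2, hdV0, hdV1⟩ := hVs x hx
  obtain ⟨hW0, hW1⟩ := hWi x hx
  have hdW2 : pd 2 (fun y => W y 2) x = 0 := by rw [hWi.pd_normal_eq_vdiv hW hx, hdiv x hx]
  have hVd (i : Fin 3) : DifferentiableAt ℝ (fun y => V y i) x := differentiable_pi.mp hV i x
  have hWd (i : Fin 3) : DifferentiableAt ℝ (fun y => W y i) x := differentiable_pi.mp hW i x
  have hpd (i j k l : Fin 3) := pd_sub ((hVd i).fun_mul (hWd j)) ((hVd k).fun_mul (hWd l)) 2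
  simp [cross, hpd, pd_mul (hVd _) (hWd _), hV2, hdV0, hdV1, hW0, hW1, hdW2]

theorem IsInsulatingAt.vcurl_isNavierSlipAt (hWi : IsInsulatingAt c W) (hW : ContDiff ℝ 2 W)
    (hdiv : ∀ x, vdiv W x = 0) (hlap : IsInsulatingAt c (vlap W)) :
    IsNavierSlipAt c (vcurl W) := by
  have hW' : Differentiable ℝ W := hW.differentiable two_ne_zero
  rw [isNavierSlipAt_iff_vcurl (differentiable_vcurl hW)]
  constructor
  · intro x hx
    have htan {i j : Fin 3} (hi : i ≠ 2) (hj : j ≠ 2) := hWi.pd_tangential_eq_zero hW' hx hi hj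
    simp [vcurl, htan]
  · have hgrad (x : V3) : grad (vdiv W) x = 0 := by
      ext i
      simp [grad, pd, funext hdiv]
    intro x hx
    simpa [vcurl_vcurl hW, hgrad] using hlap x hx

end WallConditions

section TimeDependentFields

variable {V : ℝ → V3 → V3} {c : ℝ}

/-- The field `∂ₜV(t, ·)`, componentwise. -/
def timeDeriv (V : ℝ → V3 → V3) (t : ℝ) (x : V3) : V3 := fun i => deriv (fun s => V s x i) t

theorem contDiff_timeDeriv {n : WithTop ℕ∞} (hV : ContDiff ℝ (n + 1) (Function.uncurry V))
    (t : ℝ) : ContDiff ℝ n (timeDeriv V t) :=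
  contDiff_pi.mpr fun i => contDiff_deriv_slice (contDiff_pi.mp hV i) t

theorem isNavierSlipAt_timeDeriv (hV : ContDiff ℝ 2 (Function.uncurry V))
    (hVs : ∀ t, IsNavierSlipAt c (V t)) (t : ℝ) : IsNavierSlipAt c (timeDeriv V t) := by
  intro x hx
  have hcomm (i : Fin 3) : pd 2 (fun y => timeDeriv V t y i) x =
      deriv (fun s => pd 2 (fun y => V s y i) x) t :=
    fderiv_deriv_slice_comm (contDiff_pi.mp hV i) t x _
  rw [hcomm, hcomm]
  simp [timeDeriv, fun s => hVs s x hx]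

theorem isInsulatingAt_timeDeriv (hVi : ∀ t, IsInsulatingAt c (V t)) (t : ℝ) :
    IsInsulatingAt c (timeDeriv V t) := by
  intro x hx
  simp [timeDeriv, fun s => hVi s x hx]

end TimeDependentFields

section ViscousMHD

theorem isInsulatingAt_vlap_of_induction {c mu : ℝ} (hmu : mu ≠ 0) {u B E : V3 → V3}
    (hu : Differentiable ℝ u) (hB : Differentiable ℝ B) (hus : IsNavierSlipAt c u)
    (hBi : IsInsulatingAt c B) (hEi : IsInsulatingAt c E)
    (hdivB : ∀ x, x 2 = c → vdiv B x = 0)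
    (hind : E - mu • vlap B = vcurl fun x => cross (u x) (B x)) :
    IsInsulatingAt c (vlap B) := by
  have hcurl : IsInsulatingAt c (vcurl fun x => cross (u x) (B x)) :=
    ((isNavierSlipAt_iff_vcurl (differentiable_cross hu hB)).mp
      (hus.cross_isInsulatingAt hBi hu hB hdivB)).2
  intro x hx
  simpa [← hind, hEi x hx, hmu] using hcurl x hx

theorem isInsulatingAt_vcurl_of_smul_sub_grad {c nu : ℝ} (hnu : nu ≠ 0) {V F : V3 → V3}
    {p : V3 → ℝ} (hV : Differentiable ℝ V) (hp : ContDiff ℝ 2 p) (hF : Differentiable ℝ F)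
    (hFs : IsNavierSlipAt c F) (hmom : nu • V - grad p = F) : IsInsulatingAt c (vcurl V) := by
  have hgrad : Differentiable ℝ (grad p) := differentiable_pi.mpr (differentiable_pd hp)
  have hcurl (x : V3) : vcurl F x = nu • vcurl V x := by
    rw [← hmom, vcurl_sub (hV.const_smul nu x) (hgrad x), vcurl_const_smul,
      vcurl_grad hp.contDiffAt, sub_zero]
  intro x hx
  simpa [hcurl, hnu] using ((isNavierSlipAt_iff_vcurl hF).mp hFs).2 x hx

theorem IsNavierSlipAt.cross_vcurl {c : ℝ} {u : V3 → V3} (hus : IsNavierSlipAt c u)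
    (hu : ContDiff ℝ 2 u) : IsNavierSlipAt c fun x => cross (u x) (vcurl u x) := by
  have hu' : Differentiable ℝ u := hu.differentiable two_ne_zero
  have hω : Differentiable ℝ (vcurl u) := differentiable_vcurl hu
  have hωi : IsInsulatingAt c (vcurl u) := ((isNavierSlipAt_iff_vcurl hu').mp hus).2
  exact hus.cross_isInsulatingAt hωi hu' hω fun x _ => vdiv_vcurl hu x

theorem isInsulatingAt_vcurl_vlap_of_momentum {c nu : ℝ} (hnu : nu ≠ 0) {T u B : V3 → V3}
    {p : V3 → ℝ} (hT : Differentiable ℝ T) (hu : ContDiff ℝ 3 u) (hB : ContDiff ℝ 2 B)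
    (hp : ContDiff ℝ 2 p) (hTs : IsNavierSlipAt c T) (hus : IsNavierSlipAt c u)
    (hBi : IsInsulatingAt c B) (hJs : IsNavierSlipAt c (vcurl B))
    (hdivB : ∀ x, x 2 = c → vdiv B x = 0)
    (hmom : T - nu • vlap u + (fun x => cross (vcurl u x) (u x))
      + (fun x => cross (B x) (vcurl B x)) + grad p = 0) :
    IsInsulatingAt c (vcurl (vlap u)) := by
  have hu2 : ContDiff ℝ 2 u := hu.of_le (by norm_num)
  have hB' : Differentiable ℝ B := hB.differentiable two_ne_zero
  have hJ : Differentiable ℝ (vcurl B) := differentiable_vcurl hB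
  have hlap : Differentiable ℝ (vlap u) :=
    (contDiff_vlap (n := 1) (by norm_num; exact hu)).differentiable one_ne_zero
  have hLamb : Differentiable ℝ fun x => cross (u x) (vcurl u x) :=
    differentiable_cross (hu.differentiable three_ne_zero) (differentiable_vcurl hu2)
  have hLorentz : Differentiable ℝ fun x => cross (vcurl B x) (B x) := differentiable_cross hJ hB'
  have hLorentz_slip : IsNavierSlipAt c fun x => cross (vcurl B x) (B x) :=
    hJs.cross_isInsulatingAt hBi hJ hB' hdivB
  have hforce_slip : IsNavierSlipAt c
      (T - (fun x => cross (u x) (vcurl u x)) - fun x => cross (vcurl B x) (B x)) :=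
    (hTs.sub (hus.cross_vcurl hu2) hT hLamb).sub hLorentz_slip (hT.sub hLamb) hLorentz
  have hforce : nu • vlap u - grad p =
      T - (fun x => cross (u x) (vcurl u x)) - fun x => cross (vcurl B x) (B x) := by
    simp only [cross_swap (u _), cross_swap (vcurl B _)] at hmom
    ext x i
    have hmom_apply := congrFun₂ hmom x i
    simp only [Pi.add_apply, Pi.sub_apply, Pi.smul_apply, Pi.neg_apply, Pi.zero_apply]
      at hmom_apply ⊢
    linear_combination -hmom_apply
  exact isInsulatingAt_vcurl_of_smul_sub_grad hnu hlap hp ((hT.sub hLamb).sub hLorentz)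
    hforce_slip hforce

theorem stmt_8_general {c nu mu : ℝ} (hnu : nu ≠ 0) (hmu : mu ≠ 0)
    {u B : ℝ → V3 → V3} {P : ℝ → V3 → ℝ}
    (hu : ContDiff ℝ 3 (Function.uncurry u)) (hB : ContDiff ℝ 2 (Function.uncurry B))
    (hP : ∀ t, ContDiff ℝ 2 (P t))
    (hmom : ∀ t x (i : Fin 3),
      deriv (fun s => u s x i) t - nu * vlap (u t) x i
        + cross (vcurl (u t) x) (u t x) i + cross (B t x) (vcurl (B t) x) i
        + grad (P t) x i = 0)
    (hind : ∀ t x (i : Fin 3),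
      deriv (fun s => B s x i) t - mu * vlap (B t) x i
        = vcurl (fun y => cross (u t y) (B t y)) x i)
    (hdivB : ∀ t x, vdiv (B t) x = 0)
    (hus : ∀ t, IsNavierSlipAt c (u t)) (hBi : ∀ t, IsInsulatingAt c (B t)) (t : ℝ) :
    IsInsulatingAt c (vcurl (vlap (u t))) := by
  have hut : ContDiff ℝ 3 (u t) := hu.comp (contDiff_prodMk_right t)
  have hBt : ContDiff ℝ 2 (B t) := hB.comp (contDiff_prodMk_right t)
  have hTt : Differentiable ℝ (timeDeriv u t) :=
    (contDiff_timeDeriv (n := 2) (by norm_num; exact hu) t).differentiable two_ne_zero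
  have hTs : IsNavierSlipAt c (timeDeriv u t) :=
    isNavierSlipAt_timeDeriv (hu.of_le (by norm_num)) hus t
  have hlapB : IsInsulatingAt c (vlap (B t)) :=
    isInsulatingAt_vlap_of_induction hmu (hut.differentiable three_ne_zero)
      (hBt.differentiable two_ne_zero) (hus t) (hBi t) (isInsulatingAt_timeDeriv hBi t)
      (fun x _ => hdivB t x) (funext₂ (hind t))
  have hJs : IsNavierSlipAt c (vcurl (B t)) := (hBi t).vcurl_isNavierSlipAt hBt (hdivB t) hlapB
  exact isInsulatingAt_vcurl_vlap_of_momentum hnu hTt hut hBt (hP t) hTs (hus t) (hBi t) hJs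
    (fun x _ => hdivB t x) (funext₂ (hmom t))

end ViscousMHD

/-- For a smooth solution `(u,B,P)` of the viscous MHD system with the Navier-slip b.c.
for `u` and the insulating b.c. for `B`, one has `(curl)³u(t,·) × n = 0` on `∂Ω` for every
`t`; i.e. the first and second components of `curl(Δu(t,·))` vanish on `∂Ω`. -/
theorem stmt_8 (nu mu : ℝ) (hnu : 0 < nu) (hmu : 0 < mu)
    (u B : ℝ → V3 → V3) (P : ℝ → V3 → ℝ)
    (hu : ContDiff ℝ (⊤ : ℕ∞) (Function.uncurry u))
    (hB : ContDiff ℝ (⊤ : ℕ∞) (Function.uncurry B))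
    (hP : ContDiff ℝ (⊤ : ℕ∞) (Function.uncurry P))
    (hmom : ∀ t x (i : Fin 3),
      deriv (fun s => u s x i) t - nu * vlap (u t) x i
        + cross (vcurl (u t) x) (u t x) i + cross (B t x) (vcurl (B t) x) i
        + grad (P t) x i = 0)
    (hdivu : ∀ t x, vdiv (u t) x = 0)
    (hind : ∀ t x (i : Fin 3),
      deriv (fun s => B s x i) t - mu * vlap (B t) x i
        = vcurl (fun y => cross (u t y) (B t y)) x i)
    (hdivB : ∀ t x, vdiv (B t) x = 0)
    (hubc : ∀ t x, onBdry x →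
      u t x 2 = 0 ∧ pd 2 (fun y => u t y 0) x = 0 ∧ pd 2 (fun y => u t y 1) x = 0)
    (hBbc : ∀ t x, onBdry x → B t x 0 = 0 ∧ B t x 1 = 0) :
    ∀ t x, onBdry x →
      vcurl (vlap (u t)) x 0 = 0 ∧ vcurl (vlap (u t)) x 1 = 0 := by
  intro t x hx
  have hwall {y : V3} (hy : y 2 = x 2) : onBdry y := by rwa [onBdry, hy]
  exact stmt_8_general hnu.ne' hmu.ne' (contDiff_infty.mp hu 3) (contDiff_infty.mp hB 2)
    (fun s => contDiff_infty.mp (hP.comp (contDiff_prodMk_right s)) 2) hmom hind hdivB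
    (fun s y hy => hubc s y (hwall hy)) (fun s y hy => hBbc s y (hwall hy)) t x rfl
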